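/- arXiv:math/0702328 — 4 statements merged into one kernel-verified Lean document; each statement's English description precedes it below -/
import Mathlib

section
/- For any commutative integral domain R, the ideal I₁ of the polynomial ring R[A₊, A₋, B₊, B₋, x₊, x₋, y₊, y₋] generated by the two elements (x₊B₋ − x₋B₊) − (A₊B₋ − A₋B₊) and (A₊B₋ − A₋B₊) − (A₊y₋ − A₋y₊) is a prime ideal. In particular, taking R = ℤ, the ideal I₁ of Z[Λ] is prime. -/
/-!
Put `u = x - A` and `v = B - y`. In the coordinates `B, u, v, A` the two generators become
`B₋u₊ - B₊u₋` and `v₋A₊ - v₊A₋`, two generic `2 × 2` determinants in disjoint sets of variables.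
Modulo the second one the first is again a generic determinant, now over the ring
`S = R[v, A] / (v₋A₊ - v₊A₋)`, so it suffices that the generic `2 × 2` determinant is prime over
every domain.

That determinant is linear in each of its variables. Over a domain `D`, if `a` is prime and does not
divide `b`, then `a X - b` is prime in `D[X]` because it generates the kernel of `X ↦ b / a`:
clearing denominators, `a ^ n f = g (a X)` with `n = deg f`, and `f (b / a) = 0` gives `g b = 0`, so
that `a X - b` divides `g (a X) - g b = a ^ n f`. The prime `a` does not divide `a X - b`, so
`a ^ n` can be cancelled.
-/

open scoped Classical Matroid

/-- Index type for the eight variables of `ℤ[Λ]`: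
`A s`, `B s`, `x s`, `y s` where `s : Bool` is the sign (`true` = `+`, `false` = `−`). -/
inductive SVar : Type
  | A (s : Bool)
  | B (s : Bool)
  | x (s : Bool)
  | y (s : Bool)
  deriving DecidableEq

/-- The polynomial ring `ℤ[Λ] = ℤ[A₊, A₋, B₊, B₋, x₊, x₋, y₊, y₋]`. -/
abbrev ZLam : Type := MvPolynomial SVar ℤ

noncomputable def vA (s : Bool) : ZLam := MvPolynomial.X (SVar.A s)
noncomputable def vB (s : Bool) : ZLam := MvPolynomial.X (SVar.B s)
noncomputable def vx (s : Bool) : ZLam := MvPolynomial.X (SVar.x s)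
noncomputable def vy (s : Bool) : ZLam := MvPolynomial.X (SVar.y s)

/-- `(x₊B₋ − x₋B₊) − (A₊B₋ − A₋B₊)`, the first generator of `I₁`. -/
noncomputable def gen1 : ZLam :=
  (vx true * vB false - vx false * vB true) - (vA true * vB false - vA false * vB true)

/-- `(A₊B₋ − A₋B₊) − (A₊y₋ − A₋y₊)`, the second generator of `I₁`. -/
noncomputable def gen2 : ZLam :=
  (vA true * vB false - vA false * vB true) - (vA true * vy false - vA false * vy true)

/-- The ideal `I₁ ⊆ ℤ[Λ]`. -/
noncomputable def I1 : Ideal ZLam := Ideal.span {gen1, gen2}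

section LinearPolynomial

open Polynomial

variable {D : Type*} [CommRing D] {a b : D}

lemma C_mul_X_sub_C_dvd_of_eval_scaleRoots_eq_zero {f : D[X]}
    (h : (f.scaleRoots a).eval b = 0) :
    C a * X - C b ∣ C (a ^ f.natDegree) * f := by
  have hscale : ((f.scaleRoots a).map C).eval (C a * X) = C (a ^ f.natDegree) * f := by
    rw [eval_map, scaleRoots_eval₂_mul, eval₂_C_X, C_pow]
  have hb : ((f.scaleRoots a).map C).eval (C b) = 0 := by
    rw [eval_map, eval₂_at_apply, h, C_0]
  rw [← hscale, ← sub_zero (eval _ _), ← hb]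
  exact sub_dvd_eval_sub _ _ _

lemma not_C_dvd_C_mul_X_sub_C (hab : ¬ a ∣ b) : ¬ C a ∣ C a * X - C b := fun h ↦
  hab <| by simpa using (C_dvd_iff_dvd_coeff _ _).1 h 0

lemma aeval_div_eq_zero_iff_C_mul_X_sub_C_dvd {K : Type*} [Field K] [Algebra D K]
    [FaithfulSMul D K] (ha : Prime a) (hab : ¬ a ∣ b) {f : D[X]} :
    aeval (algebraMap D K b / algebraMap D K a) f = 0 ↔ C a * X - C b ∣ f := by
  have hinj := FaithfulSMul.algebraMap_injective D K
  have : IsDomain D := hinj.isDomain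
  constructor
  · intro hf
    have hscale : (f.scaleRoots a).eval b = 0 := hinj <| by
      rw [map_zero, ← aeval_algebraMap_apply_eq_algebraMap_eval]
      exact scaleRoots_aeval_eq_zero_of_aeval_div_eq_zero hinj hf
        (mem_nonZeroDivisors_of_ne_zero ha.ne_zero)
    obtain ⟨q, hq⟩ := C_mul_X_sub_C_dvd_of_eval_scaleRoots_eq_zero hscale
    rw [C_pow] at hq
    have hCa : Prime (C a) := prime_C_iff.2 ha
    obtain ⟨t, rfl⟩ := hCa.pow_dvd_of_dvd_mul_left _ (not_C_dvd_C_mul_X_sub_C hab) ⟨f, hq.symm⟩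
    refine ⟨t, mul_left_cancel₀ (pow_ne_zero _ hCa.ne_zero) (hq.trans ?_)⟩
    ring
  · rintro ⟨g, rfl⟩
    have ha0 : algebraMap D K a ≠ 0 := (map_ne_zero_iff _ hinj).2 ha.ne_zero
    simp [mul_div_cancel₀ _ ha0]

lemma prime_C_mul_X_sub_C [IsDomain D] (ha : Prime a) (hab : ¬ a ∣ b) :
    Prime (C a * X - C b) := by
  have hne : C a * X - C b ≠ 0 := fun h ↦ not_C_dvd_C_mul_X_sub_C hab (h ▸ dvd_zero _)
  let r := algebraMap D (FractionRing D) b / algebraMap D (FractionRing D) a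
  have hker : RingHom.ker (aeval (R := D) r) = Ideal.span {C a * X - C b} := by
    ext f
    rw [Ideal.mem_span_singleton, RingHom.mem_ker, aeval_div_eq_zero_iff_C_mul_X_sub_C_dvd ha hab]
  rw [← Ideal.span_singleton_prime hne, ← hker]
  exact RingHom.ker_isPrime _

end LinearPolynomial

section Determinant

open MvPolynomial

variable {σ τ R : Type*} [CommRing R]

lemma exists_algEquiv_polynomial_subtype_ne (i : σ) :
    ∃ e : MvPolynomial σ R ≃ₐ[R] Polynomial (MvPolynomial {j // j ≠ i} R),
      e (X i) = Polynomial.X ∧ ∀ p, e (rename (↑) p) = Polynomial.C p := by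
  classical
  let e : MvPolynomial σ R ≃ₐ[R] Polynomial (MvPolynomial {j // j ≠ i} R) :=
    (renameEquiv R (Equiv.optionSubtypeNe i).symm).trans (optionEquivLeft R _)
  have he : e.symm.toAlgHom.comp Polynomial.CAlgHom = rename (↑) := by ext; simp [e]
  refine ⟨e, by simp [e], fun p ↦ ?_⟩
  rw [← he]
  exact e.apply_symm_apply _

lemma prime_mul_X_sub [IsDomain R] {f g : MvPolynomial σ R} {i : σ} (hif : i ∉ f.vars)
    (hig : i ∉ g.vars) (hf : Prime f) (hfg : ¬ f ∣ g) : Prime (f * X i - g) := by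
  obtain ⟨e, hX, hC⟩ := exists_algEquiv_polynomial_subtype_ne (R := R) i
  have hrename {p : MvPolynomial σ R} (hp : i ∉ p.vars) :
      ∃ q : MvPolynomial {j // j ≠ i} R, rename (↑) q = p :=
    exists_rename_eq_of_vars_subset_range _ _ Subtype.val_injective (by simpa [Set.subset_def])
  obtain ⟨f, rfl⟩ := hrename hif
  obtain ⟨g, rfl⟩ := hrename hig
  rw [← MulEquiv.prime_iff e, hC, Polynomial.prime_C_iff] at hf
  rw [← MulEquiv.prime_iff e, map_sub, map_mul, hC, hC, hX]
  exact prime_C_mul_X_sub_C hf fun h ↦ hfg (map_dvd (rename (R := R) Subtype.val) h)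

lemma prime_X_mul_X_sub_X_mul_X [IsDomain R] {i j k l : σ} (hji : j ≠ i) (hjk : j ≠ k)
    (hjl : j ≠ l) (hik : i ≠ k) (hil : i ≠ l) :
    Prime (X i * X j - X k * X l : MvPolynomial σ R) := by
  classical
  refine prime_mul_X_sub (by simpa) (fun h ↦ ?_) X_prime fun h ↦ ?_
  · simpa [hjk, hjl] using vars_mul _ _ h
  · rcases X_prime.dvd_or_dvd h with h | h <;> simp_all [X_dvd_X]

lemma prime_det_mvPolynomialX_fin_two [IsDomain R] :
    Prime (Matrix.mvPolynomialX (Fin 2) (Fin 2) R).det := by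
  simp only [Matrix.det_fin_two, Matrix.mvPolynomialX_apply]
  apply prime_X_mul_X_sub_X_mul_X <;> simp

lemma map_det_mvPolynomialX {n S : Type*} [Fintype n] [DecidableEq n] [CommRing S] (f : R →+* S) :
    map f (Matrix.mvPolynomialX n n R).det = (Matrix.mvPolynomialX n n S).det := by
  rw [RingHom.map_det]
  congr 1
  ext i j : 1
  simp

lemma isPrime_map_rename_inl_sup_map_rename_inr {I : Ideal (MvPolynomial σ R)}
    {J : Ideal (MvPolynomial τ R)}
    (h : (I.map (map (algebraMap R (MvPolynomial τ R ⧸ J)))).IsPrime) :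
    (I.map (rename (R := R) (Sum.inl : σ → σ ⊕ τ)) ⊔
      J.map (rename (R := R) (Sum.inr : τ → σ ⊕ τ))).IsPrime := by
  let e := sumAlgEquiv R σ τ
  let ψ : MvPolynomial (σ ⊕ τ) R →ₐ[R] MvPolynomial σ (MvPolynomial τ R ⧸ J) :=
    (mapAlgHom (Ideal.Quotient.mkₐ R J)).comp e.toAlgHom
  have hψ : Function.Surjective ψ :=
    (map_surjective _ Ideal.Quotient.mk_surjective).comp e.surjective
  have hinl : (I.map (rename Sum.inl)).map ψ =
      I.map (map (algebraMap R (MvPolynomial τ R ⧸ J))) := by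
    have : ψ.comp (rename Sum.inl) = mapAlgHom (Algebra.ofId R _) := by ext; simp [ψ, e]
    rw [Ideal.map_mapₐ, this]
    rfl
  have hker : RingHom.ker ψ = J.map (rename Sum.inr) := calc
    RingHom.ker ψ = (RingHom.ker (map (σ := σ) (Ideal.Quotient.mk J))).comap e := rfl
    _ = (J.map C).comap e := by rw [ker_map, Ideal.mk_ker]
    _ = ((J.map (rename Sum.inr)).map e.toAlgHom).comap e := by
      rw [Ideal.map_mapₐ, sumAlgEquiv_comp_rename_inr]
      rfl
    _ = J.map (rename Sum.inr) := Ideal.comap_map_of_bijective e e.bijective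
  rw [← hker, ← Ideal.comap_map_of_surjective' ψ hψ, hinl]
  exact Ideal.comap_isPrime ψ _

lemma isPrime_span_det_mvPolynomialX_fin_two [IsDomain R] :
    (Ideal.span {(Matrix.mvPolynomialX (Fin 2) (Fin 2) R).det}).IsPrime :=
  (Ideal.span_singleton_prime prime_det_mvPolynomialX_fin_two.ne_zero).2
    prime_det_mvPolynomialX_fin_two

lemma isPrime_span_pair_rename_det_mvPolynomialX_fin_two [IsDomain R] :
    (Ideal.span {rename Sum.inl (Matrix.mvPolynomialX (Fin 2) (Fin 2) R).det,
      rename Sum.inr (Matrix.mvPolynomialX (Fin 2) (Fin 2) R).det} :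
      Ideal (MvPolynomial (Fin 2 × Fin 2 ⊕ Fin 2 × Fin 2) R)).IsPrime := by
  let J := Ideal.span {(Matrix.mvPolynomialX (Fin 2) (Fin 2) R).det}
  have : J.IsPrime := isPrime_span_det_mvPolynomialX_fin_two
  have h : (J.map (map (algebraMap R (MvPolynomial (Fin 2 × Fin 2) R ⧸ J)))).IsPrime := by
    rw [Ideal.map_span, Set.image_singleton, map_det_mvPolynomialX]
    exact isPrime_span_det_mvPolynomialX_fin_two
  simpa only [J, Ideal.map_span, Set.image_singleton, ← Ideal.span_insert] using
    isPrime_map_rename_inl_sup_map_rename_inr h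

/-- The change of variables turning the entries of two generic `2 × 2` matrices into the rows
`B`, `x - A` and `B - y`, `A`, so that their determinants become the generators of `I₁`. The columns
are in the order `-`, `+`, that of `finTwoEquiv`. -/
noncomputable def blockEquiv (R : Type*) [CommRing R] :
    MvPolynomial (Fin 2 × Fin 2 ⊕ Fin 2 × Fin 2) R ≃ₐ[R] MvPolynomial SVar R :=
  AlgEquiv.ofAlgHom
    (aeval fun
      | .inl (0, j) => X (.B (finTwoEquiv j))
      | .inl (1, j) => X (.x (finTwoEquiv j)) - X (.A (finTwoEquiv j))
      | .inr (0, j) => X (.B (finTwoEquiv j)) - X (.y (finTwoEquiv j))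
      | .inr (1, j) => X (.A (finTwoEquiv j)))
    (aeval fun
      | .A s => X (.inr (1, finTwoEquiv.symm s))
      | .B s => X (.inl (0, finTwoEquiv.symm s))
      | .x s => X (.inl (1, finTwoEquiv.symm s)) + X (.inr (1, finTwoEquiv.symm s))
      | .y s => X (.inl (0, finTwoEquiv.symm s)) - X (.inr (0, finTwoEquiv.symm s)))
    (by ext (s | s | s | s) : 1 <;> simp)
    (by ext (⟨i, j⟩ | ⟨i, j⟩) : 1 <;> fin_cases i <;> simp)

lemma blockEquiv_rename_inl_det :
    blockEquiv R (rename Sum.inl (Matrix.mvPolynomialX (Fin 2) (Fin 2) R).det) =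
      (X (SVar.x true) * X (SVar.B false) - X (SVar.x false) * X (SVar.B true))
        - (X (SVar.A true) * X (SVar.B false) - X (SVar.A false) * X (SVar.B true)) := by
  simp only [Matrix.det_fin_two, Matrix.mvPolynomialX_apply, map_sub, map_mul, rename_X,
    blockEquiv, finTwoEquiv, Equiv.coe_fn_mk, Equiv.symm_mk, AlgEquiv.ofAlgHom_apply, aeval_X,
    Fin.reduceBEq, BEq.rfl]
  ring

lemma blockEquiv_rename_inr_det :
    blockEquiv R (rename Sum.inr (Matrix.mvPolynomialX (Fin 2) (Fin 2) R).det) =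
      (X (SVar.A true) * X (SVar.B false) - X (SVar.A false) * X (SVar.B true))
        - (X (SVar.A true) * X (SVar.y false) - X (SVar.A false) * X (SVar.y true)) := by
  simp only [Matrix.det_fin_two, Matrix.mvPolynomialX_apply, map_sub, map_mul, rename_X,
    blockEquiv, finTwoEquiv, Equiv.coe_fn_mk, Equiv.symm_mk, AlgEquiv.ofAlgHom_apply, aeval_X,
    Fin.reduceBEq, BEq.rfl]
  ring

theorem I1_isPrime_general (R : Type*) [CommRing R] [IsDomain R] :
    (Ideal.span
      {(X (SVar.x true) * X (SVar.B false) - X (SVar.x false) * X (SVar.B true))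
          - (X (SVar.A true) * X (SVar.B false) - X (SVar.A false) * X (SVar.B true)),
        (X (SVar.A true) * X (SVar.B false) - X (SVar.A false) * X (SVar.B true))
          - (X (SVar.A true) * X (SVar.y false) - X (SVar.A false) * X (SVar.y true))} :
      Ideal (MvPolynomial SVar R)).IsPrime := by
  have := isPrime_span_pair_rename_det_mvPolynomialX_fin_two (R := R)
  rw [← blockEquiv_rename_inl_det, ← blockEquiv_rename_inr_det, ← Set.image_pair,
    ← Ideal.map_span]
  exact Ideal.map_isPrime_of_equiv (blockEquiv R)

end Determinant

/-- The ideal `I₁` (over any integral domain `R`, and in particular over `ℤ`) is prime. -/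
theorem I1_isPrime (R : Type) [CommRing R] [IsDomain R] :
    (Ideal.span
      {((MvPolynomial.X (SVar.x true) * MvPolynomial.X (SVar.B false)
            - MvPolynomial.X (SVar.x false) * MvPolynomial.X (SVar.B true))
          - (MvPolynomial.X (SVar.A true) * MvPolynomial.X (SVar.B false)
            - MvPolynomial.X (SVar.A false) * MvPolynomial.X (SVar.B true))
          : MvPolynomial SVar R),
        (MvPolynomial.X (SVar.A true) * MvPolynomial.X (SVar.B false)
            - MvPolynomial.X (SVar.A false) * MvPolynomial.X (SVar.B true))
          - (MvPolynomial.X (SVar.A true) * MvPolynomial.X (SVar.y false)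
            - MvPolynomial.X (SVar.A false) * MvPolynomial.X (SVar.y true))}).IsPrime ∧
    I1.IsPrime := by
  exact ⟨I1_isPrime_general R, I1_isPrime_general ℤ⟩
end

section
/- Let R be a commutative integral domain and let R[a, b, c, d, p, q, u, v] be the polynomial ring in eight indeterminates over R. Then the ideal generated by the two elements a·d − b·c and p·v − q·u is a prime ideal; equivalently, the quotient ring R[a, b, c, d, p, q, u, v]/(ad − bc, pv − qu) is an integral domain. -/
/-!
Record a monomial in the entries of a family of generic `2 × 2` matrices by its row sums and column
sums, matrix by matrix. This induces a homomorphism from the polynomial ring to the monoid algebra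
of a monoid of `ℕ`-valued functions; that monoid has unique sums, so over a domain the monoid
algebra is a domain and the kernel is prime. Like every kernel of this kind, it is generated by the
differences of monomials with equal image. If two `2 × 2` exponent matrices have the same row and
column sums, they differ by a multiple of `(1, -1; -1, 1)`, so the relations `ad = bc` identify the
two monomials: the determinants already generate the kernel.
-/

open scoped Classical Matroid


/-- Index type for the eight variables `a, b, c, d, p, q, u, v`. -/
inductive GVar : Type
  | a | b | c | d | p | q | u | v
  deriving DecidableEq

theorem ker_mapDomainRingHom_eq_span {R M N : Type*} [Ring R] [AddMonoid M] [AddMonoid N]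
    (f : M →+ N) :
    RingHom.ker (AddMonoidAlgebra.mapDomainRingHom R f) =
      Ideal.span {x | ∃ m n, f m = f n ∧
        x = AddMonoidAlgebra.single m (1 : R) - AddMonoidAlgebra.single n 1} := by
  set I := Ideal.span {x | ∃ m n, f m = f n ∧
    x = AddMonoidAlgebra.single m (1 : R) - AddMonoidAlgebra.single n 1}
  apply le_antisymm
  · let g : N → M := Function.invFun f
    have sub_mem (x : AddMonoidAlgebra R M) :
        x - (x.mapDomain f).mapDomain g ∈ I := by
      induction x using AddMonoidAlgebra.induction_linear with
      | zero => simp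
      | add x y hx hy =>
        simpa only [AddMonoidAlgebra.mapDomain_add, add_sub_add_comm] using I.add_mem hx hy
      | single m r =>
        have hg : f m = f (g (f m)) := (Function.invFun_eq ⟨m, rfl⟩).symm
        have h := I.mul_mem_left (AddMonoidAlgebra.single 0 r) (Ideal.subset_span ⟨m, _, hg, rfl⟩)
        simpa [mul_sub, AddMonoidAlgebra.single_mul_single] using h
    intro x hx
    have hx' : x.mapDomain f = 0 := hx
    simpa [hx'] using sub_mem x
  · rw [Ideal.span_le]
    rintro _ ⟨m, n, h, rfl⟩
    simp only [SetLike.mem_coe, RingHom.sub_mem_ker_iff, AddMonoidAlgebra.mapDomainRingHom_apply,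
      AddMonoidAlgebra.mapDomain_single, h]

theorem prod_pow_eq_of_sum_eq {A : Type*} [CommMonoid A] {y : Matrix (Fin 2) (Fin 2) A}
    (hy : y 0 0 * y 1 1 = y 0 1 * y 1 0) {e e' : Matrix (Fin 2) (Fin 2) ℕ}
    (hrow : ∀ r, ∑ c, e r c = ∑ c, e' r c) (hcol : ∀ c, ∑ r, e r c = ∑ r, e' r c) :
    ∏ r, ∏ c, y r c ^ e r c = ∏ r, ∏ c, y r c ^ e' r c := by
  wlog hle : e 0 0 ≤ e' 0 0 generalizing e e'
  · exact (this (fun r => (hrow r).symm) (fun c => (hcol c).symm) (le_of_not_ge hle)).symm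
  obtain ⟨t, h₀₀⟩ := Nat.exists_eq_add_of_le hle
  simp only [Fin.sum_univ_two, Fin.forall_fin_two] at hrow hcol
  have h₀₁ : e 0 1 = e' 0 1 + t := by lia
  have h₁₀ : e 1 0 = e' 1 0 + t := by lia
  have h₁₁ : e' 1 1 = e 1 1 + t := by lia
  simp only [Fin.prod_univ_two, h₀₀, h₀₁, h₁₀, h₁₁]
  calc y 0 0 ^ e 0 0 * y 0 1 ^ (e' 0 1 + t) * (y 1 0 ^ (e' 1 0 + t) * y 1 1 ^ e 1 1)
      = y 0 0 ^ e 0 0 * y 0 1 ^ e' 0 1 * y 1 0 ^ e' 1 0 * y 1 1 ^ e 1 1 *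
          (y 0 1 * y 1 0) ^ t := by
        simp only [pow_add, mul_pow]; ac_rfl
    _ = y 0 0 ^ e 0 0 * y 0 1 ^ e' 0 1 * y 1 0 ^ e' 1 0 * y 1 1 ^ e 1 1 *
          (y 0 0 * y 1 1) ^ t := by rw [hy]
    _ = y 0 0 ^ (e 0 0 + t) * y 0 1 ^ e' 0 1 * (y 1 0 ^ e' 1 0 * y 1 1 ^ (e 1 1 + t)) := by
        simp only [pow_add, mul_pow]; ac_rfl

/-- The row sums and column sums of a family of matrices of natural numbers, indexed by `ι` and
given by their entries `m (i, r, c)`; in statistics, the margins of a family of contingency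
tables. -/
def margins (ι κ μ : Type*) [Fintype κ] [Fintype μ] :
    (ι × κ × μ →₀ ℕ) →+ (ι → κ → ℕ) × (ι → μ → ℕ) where
  toFun m := (fun i r => ∑ c, m (i, r, c), fun i c => ∑ r, m (i, r, c))
  map_zero' := by ext <;> simp
  map_add' m n := by ext <;> simp [Finset.sum_add_distrib]

theorem finsuppProd_pow_eq_of_margins_eq {A ι : Type*} [CommMonoid A]
    {y : ι → Matrix (Fin 2) (Fin 2) A} (hy : ∀ i, y i 0 0 * y i 1 1 = y i 0 1 * y i 1 0)
    {m n : ι × Fin 2 × Fin 2 →₀ ℕ} (h : margins ι (Fin 2) (Fin 2) m = margins ι (Fin 2) (Fin 2) n) :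
    (m.prod fun x k => y x.1 x.2.1 x.2.2 ^ k) = n.prod fun x k => y x.1 x.2.1 x.2.2 ^ k := by
  let s : Finset ι := (m.support ∪ n.support).image Prod.fst
  have prod_eq {l : ι × Fin 2 × Fin 2 →₀ ℕ} (hl : l.support ⊆ m.support ∪ n.support) :
      (l.prod fun x k => y x.1 x.2.1 x.2.2 ^ k) = ∏ i ∈ s, ∏ r, ∏ c, y i r c ^ l (i, r, c) := by
    have hs : l.support ⊆ s ×ˢ Finset.univ := fun x hx =>
      Finset.mem_product.mpr ⟨Finset.mem_image_of_mem _ (hl hx), Finset.mem_univ _⟩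
    rw [Finsupp.prod_of_support_subset l hs _ fun _ _ => pow_zero _, Finset.prod_product]
    simp only [Fintype.prod_prod_type]
  rw [prod_eq Finset.subset_union_left, prod_eq Finset.subset_union_right]
  obtain ⟨hrow, hcol⟩ := Prod.ext_iff.mp h
  exact Finset.prod_congr rfl fun i _ => prod_pow_eq_of_sum_eq (hy i)
    (e := fun r c => m (i, r, c)) (e' := fun r c => n (i, r, c))
    (fun r => congrFun₂ hrow i r) (fun c => congrFun₂ hcol i c)

section GenericDeterminants

open MvPolynomial

/-- The determinant of the `i`-th matrix in a family of generic `2 × 2` matrices with disjoint sets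
of variables; the variable `(i, r, c)` is the entry of that matrix in row `r` and column `c`. -/
noncomputable def genericDet (R : Type*) {ι : Type*} [CommRing R] (i : ι) :
    MvPolynomial (ι × Fin 2 × Fin 2) R :=
  X (i, 0, 0) * X (i, 1, 1) - X (i, 0, 1) * X (i, 1, 0)

theorem mk_monomial_eq_of_margins_eq {R ι : Type*} [CommRing R]
    {I : Ideal (MvPolynomial (ι × Fin 2 × Fin 2) R)} (hI : ∀ i, genericDet R i ∈ I)
    {m n : ι × Fin 2 × Fin 2 →₀ ℕ} (h : margins ι (Fin 2) (Fin 2) m = margins ι (Fin 2) (Fin 2) n) :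
    Ideal.Quotient.mk I (monomial m 1) = Ideal.Quotient.mk I (monomial n 1) := by
  let y (i : ι) : Matrix (Fin 2) (Fin 2) (MvPolynomial (ι × Fin 2 × Fin 2) R ⧸ I) :=
    fun r c => Ideal.Quotient.mk I (X (i, r, c))
  have hy (i : ι) : y i 0 0 * y i 1 1 = y i 0 1 * y i 1 0 := by
    simpa only [map_mul] using Ideal.Quotient.eq.mpr (hI i)
  simpa [monomial_eq, map_finsuppProd] using finsuppProd_pow_eq_of_margins_eq hy h

theorem ker_mapDomainRingHom_margins_eq_span (R ι : Type*) [CommRing R] :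
    RingHom.ker (AddMonoidAlgebra.mapDomainRingHom R (margins ι (Fin 2) (Fin 2))) =
      Ideal.span (Set.range (genericDet R)) := by
  rw [ker_mapDomainRingHom_eq_span]
  apply le_antisymm <;> rw [Ideal.span_le]
  · rintro _ ⟨m, n, h, rfl⟩
    exact Ideal.Quotient.eq.mp <|
      mk_monomial_eq_of_margins_eq (fun i => Ideal.subset_span (Set.mem_range_self i)) h
  · rintro _ ⟨i, rfl⟩
    refine Ideal.subset_span ⟨Finsupp.single (i, 0, 0) 1 + Finsupp.single (i, 1, 1) 1,
      Finsupp.single (i, 0, 1) 1 + Finsupp.single (i, 1, 0) 1, ?_, ?_⟩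
    · ext j k <;> fin_cases k <;> simp [margins, Finsupp.single_apply]
    · simp [genericDet, X, monomial]

theorem span_range_genericDet_isPrime (R ι : Type*) [CommRing R] [IsDomain R] :
    (Ideal.span (Set.range (genericDet R : ι → _))).IsPrime := by
  rw [← ker_mapDomainRingHom_margins_eq_span]
  exact RingHom.ker_isPrime _

theorem span_two_generic_dets_isPrime_general {R ι σ : Type*} [CommRing R] [IsDomain R]
    (x : ι × Fin 2 × Fin 2 ≃ σ) :
    (Ideal.span (Set.range fun i => (X (x (i, 0, 0)) * X (x (i, 1, 1)) -
      X (x (i, 0, 1)) * X (x (i, 1, 0)) : MvPolynomial σ R))).IsPrime := by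
  have hmap : Ideal.map (renameEquiv R x) (Ideal.span (Set.range (genericDet R))) =
      Ideal.span (Set.range fun i => (X (x (i, 0, 0)) * X (x (i, 1, 1)) -
        X (x (i, 0, 1)) * X (x (i, 1, 0)) : MvPolynomial σ R)) := by
    rw [Ideal.map_span, ← Set.range_comp]
    simp [Function.comp_def, genericDet]
  have := span_range_genericDet_isPrime R ι
  exact hmap ▸ Ideal.map_isPrime_of_equiv (renameEquiv R x)

end GenericDeterminants

/-- The positions of the eight variables in the two matrices `(a b; c d)` and `(p q; u v)`. -/
def GVar.ofEntry : Fin 2 × Fin 2 × Fin 2 ≃ GVar where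
  toFun
    | (0, 0, 0) => .a | (0, 0, 1) => .b | (0, 1, 0) => .c | (0, 1, 1) => .d
    | (1, 0, 0) => .p | (1, 0, 1) => .q | (1, 1, 0) => .u | (1, 1, 1) => .v
  invFun
    | .a => (0, 0, 0) | .b => (0, 0, 1) | .c => (0, 1, 0) | .d => (0, 1, 1)
    | .p => (1, 0, 0) | .q => (1, 0, 1) | .u => (1, 1, 0) | .v => (1, 1, 1)
  left_inv := by decide
  right_inv := by rintro (_ | _) <;> rfl

open MvPolynomial in
/-- The ideal of `R[a,b,c,d,p,q,u,v]` generated by the determinants `ad − bc` and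
`pv − qu` of two generic 2×2 matrices in disjoint variables is prime; equivalently, the
quotient ring is an integral domain. -/
theorem span_two_generic_dets_isPrime (R : Type) [CommRing R] [IsDomain R] :
    (Ideal.span {(X GVar.a * X GVar.d - X GVar.b * X GVar.c : MvPolynomial GVar R),
        X GVar.p * X GVar.v - X GVar.q * X GVar.u}).IsPrime ∧
      IsDomain (MvPolynomial GVar R ⧸
        Ideal.span {(X GVar.a * X GVar.d - X GVar.b * X GVar.c : MvPolynomial GVar R),
          X GVar.p * X GVar.v - X GVar.q * X GVar.u}) := by
  have hprime := span_two_generic_dets_isPrime_general (R := R) GVar.ofEntry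
  rw [Fin.range_fin_succ, Set.range_unique] at hprime
  exact ⟨hprime, (Ideal.Quotient.isDomain_iff_prime _).mpr hprime⟩
end

section
/- In the quotient ring Z[Λ]/I₁ the following identity holds for every integer k ≥ 1 and all signs ε, ε₁, …, ε_k ∈ {+, −}: A_ε · ( ∏_{i=1}^k y_{ε_i} − ∏_{i=1}^k B_{ε_i} ) = (y_ε − B_ε) · Σ_{i=1}^k A_{ε_i} · ( ∏_{j=1}^{i−1} y_{ε_j} ) · ( ∏_{t=i+1}^k B_{ε_t} ), where empty products equal 1. -/
/-!
The second generator of `I₁` says `A₊ (y₋ - B₋) = A₋ (y₊ - B₊)`, so modulo it the sign can be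
exchanged: `A_ε (y_δ - B_δ) = (y_ε - B_ε) A_δ` for all `ε`, `δ`. Applying this to each summand of
`∏ y - ∏ B = ∑ᵢ (y_i - B_i) (∏_{j<i} y_j) (∏_{t>i} B_t)`, multiplied by `A_ε`, gives the identity.
-/

open scoped Classical Matroid

section Telescoping

variable {ι R : Type*} [LinearOrder ι] [CommRing R]

theorem prod_sub_prod_ordered (s : Finset ι) (f g : ι → R) :
    ∏ i ∈ s, f i - ∏ i ∈ s, g i =
      ∑ i ∈ s, (f i - g i) * (∏ j ∈ s with j < i, f j) * ∏ j ∈ s with i < j, g j := by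
  simpa only [add_sub_cancel, ← sub_eq_iff_eq_add'] using
    Finset.prod_add_ordered s g fun i => f i - g i

theorem mul_prod_sub_prod_ordered_of_exchange {s : Finset ι} {a d : R} {c f g : ι → R}
    (exchange : ∀ i ∈ s, a * (f i - g i) = d * c i) :
    a * (∏ i ∈ s, f i - ∏ i ∈ s, g i) =
      d * ∑ i ∈ s, c i * (∏ j ∈ s with j < i, f j) * ∏ j ∈ s with i < j, g j := by
  simp only [prod_sub_prod_ordered, Finset.mul_sum, ← mul_assoc]
  exact Finset.sum_congr rfl fun i hi => by rw [exchange i hi]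

end Telescoping

theorem mul_prod_range_sub_prod_range_of_exchange {R : Type*} [CommRing R] {k : ℕ} {a d : R}
    {c f g : ℕ → R} (exchange : ∀ i ∈ Finset.range k, a * (f i - g i) = d * c i) :
    a * (∏ i ∈ Finset.range k, f i - ∏ i ∈ Finset.range k, g i) =
      d * ∑ i ∈ Finset.range k,
        c i * (∏ j ∈ Finset.range i, f j) * ∏ j ∈ Finset.Ico (i + 1) k, g j := by
  rw [mul_prod_sub_prod_ordered_of_exchange exchange]
  congr 1
  refine Finset.sum_congr rfl fun i hi => ?_
  have before : {j ∈ Finset.range k | j < i} = Finset.range i := by grind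
  have after : {j ∈ Finset.range k | i < j} = Finset.Ico (i + 1) k := by grind
  rw [before, after]

theorem mk_vA_mul_vy_sub_vB_of_gen2_mem {I : Ideal ZLam} (hI : gen2 ∈ I) (ε δ : Bool) :
    Ideal.Quotient.mk I (vA ε * (vy δ - vB δ)) = Ideal.Quotient.mk I ((vy ε - vB ε) * vA δ) := by
  have plus_minus : Ideal.Quotient.mk I (vA true * (vy false - vB false)) =
      Ideal.Quotient.mk I ((vy true - vB true) * vA false) := by
    rw [eq_comm, Ideal.Quotient.eq]
    convert hI using 1
    rw [gen2]
    ring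
  cases ε <;> cases δ
  · rw [mul_comm]
  · simpa only [mul_comm] using plus_minus.symm
  · exact plus_minus
  · rw [mul_comm]

theorem gen2_mem_I1 : gen2 ∈ I1 :=
  Ideal.subset_span (Set.mem_insert_of_mem _ rfl)

theorem key_identity_mod_I1_general {I : Ideal ZLam} (hI : gen2 ∈ I) (k : ℕ) (ε : Bool)
    (εs : ℕ → Bool) :
    Ideal.Quotient.mk I
        (vA ε * (∏ i ∈ Finset.range k, vy (εs i) - ∏ i ∈ Finset.range k, vB (εs i))) =
      Ideal.Quotient.mk I
        ((vy ε - vB ε) *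
          ∑ i ∈ Finset.range k,
            vA (εs i) * (∏ j ∈ Finset.range i, vy (εs j)) *
              ∏ t ∈ Finset.Ico (i + 1) k, vB (εs t)) := by
  have exchange (i : ℕ) := mk_vA_mul_vy_sub_vB_of_gen2_mem hI ε (εs i)
  simp only [map_mul, map_sub, map_prod, map_sum] at exchange ⊢
  exact mul_prod_range_sub_prod_range_of_exchange fun i _ => exchange i

/-- The key identity in `ℤ[Λ]/I₁`:
`A_ε(∏ y_{ε_i} − ∏ B_{ε_i}) = (y_ε − B_ε)·Σ_i A_{ε_i}·(∏_{j<i} y_{ε_j})·(∏_{t>i} B_{ε_t})`. -/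
theorem key_identity_mod_I1 (k : ℕ) (hk : 1 ≤ k) (ε : Bool) (εs : ℕ → Bool) :
    Ideal.Quotient.mk I1
        (vA ε * (∏ i ∈ Finset.range k, vy (εs i) - ∏ i ∈ Finset.range k, vB (εs i))) =
      Ideal.Quotient.mk I1
        ((vy ε - vB ε) *
          ∑ i ∈ Finset.range k,
            vA (εs i) * (∏ j ∈ Finset.range i, vy (εs j)) *
              ∏ t ∈ Finset.Ico (i + 1) k, vB (εs t)) :=
  key_identity_mod_I1_general gen2_mem_I1 k ε εs
end

section
/- For each sign ε ∈ {+, −}, the element x_ε·y_ε − A_ε·y_ε − B_ε·x_ε of Z[Λ] does not belong to the ideal I₁; that is, its image in the quotient ring Z[Λ]/I₁ is nonzero. (Indeed, every element of I₁ is a ℤ-linear combination of monomials each of which involves both a positively-indexed and a negatively-indexed variable.) -/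
open scoped Classical Matroid

/-!
Every monomial of the two generators is a product of variables of opposite signs, so `I₁` is
contained in the ideal generated by the variables of sign `-ε`. The polynomial
`x_ε y_ε − A_ε y_ε − B_ε x_ε` is not: setting the variables of sign `ε` to `1` and those of sign
`-ε` to `0` sends it to `1 - 1 - 1 = -1`.
-/

theorem eval_eq_zero_of_mem_span_X_image {σ R : Type*} [CommSemiring R] {S : Set σ} {f : σ → R}
    (hf : ∀ i ∈ S, f i = 0) {p : MvPolynomial σ R}
    (hp : p ∈ Ideal.span (MvPolynomial.X '' S)) : MvPolynomial.eval f p = 0 := by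
  suffices hle : Ideal.span (MvPolynomial.X '' S) ≤ RingHom.ker (MvPolynomial.eval f) from hle hp
  rw [Ideal.span_le, Set.image_subset_iff]
  intro i hi
  simpa only [Set.mem_preimage, SetLike.mem_coe, RingHom.mem_ker, MvPolynomial.eval_X] using hf i hi

/-- The sign index of a variable, `true` for `+` and `false` for `−`. -/
def SVar.sign : SVar → Bool
  | .A s | .B s | .x s | .y s => s

/-- The ideal of `ℤ[Λ]` generated by the four variables of sign `s`. By
`MvPolynomial.mem_ideal_span_X_image` it consists of the polynomials all of whose monomials involve
a variable of sign `s`. -/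
noncomputable def signIdeal (s : Bool) : Ideal ZLam :=
  Ideal.span (MvPolynomial.X '' {v : SVar | v.sign = s})

theorem X_mul_X_mem_signIdeal {u v : SVar} (huv : u.sign ≠ v.sign) (s : Bool) :
    (MvPolynomial.X u * MvPolynomial.X v : ZLam) ∈ signIdeal s := by
  obtain hu | hu := Bool.eq_or_eq_not u.sign s
  · exact Ideal.mul_mem_right _ _ (Ideal.subset_span ⟨u, hu, rfl⟩)
  · have hv : v.sign = s := by simpa [hu, eq_comm] using huv
    exact Ideal.mul_mem_left _ _ (Ideal.subset_span ⟨v, hv, rfl⟩)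

theorem X_mul_X_sub_X_mul_X_mem_signIdeal {u v w z : SVar} (huv : u.sign ≠ v.sign)
    (hwz : w.sign ≠ z.sign) (s : Bool) :
    (MvPolynomial.X u * MvPolynomial.X v - MvPolynomial.X w * MvPolynomial.X z : ZLam) ∈
      signIdeal s :=
  sub_mem (X_mul_X_mem_signIdeal huv s) (X_mul_X_mem_signIdeal hwz s)

theorem I1_le_signIdeal (s : Bool) : I1 ≤ signIdeal s := by
  rw [I1, Ideal.span_le, Set.pair_subset_iff]
  constructor <;>
    exact sub_mem (X_mul_X_sub_X_mul_X_mem_signIdeal (by decide) (by decide) s)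
      (X_mul_X_sub_X_mul_X_mem_signIdeal (by decide) (by decide) s)

/-- For each sign `ε`, the element `x_ε y_ε − A_ε y_ε − B_ε x_ε` does not lie in `I₁`:
its image in `ℤ[Λ]/I₁` is nonzero. -/
theorem det_not_mem_I1 (ε : Bool) :
    vx ε * vy ε - vA ε * vy ε - vB ε * vx ε ∉ I1 := by
  intro hmem
  let f : SVar → ℤ := fun v ↦ if v.sign = ε then 1 else 0
  have hf : ∀ v ∈ {v : SVar | v.sign = !ε}, f v = 0 := by
    rintro v (hv : v.sign = !ε)
    simp [f, hv]
  have heval := eval_eq_zero_of_mem_span_X_image hf (I1_le_signIdeal (!ε) hmem)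
  have heval_neg_one :
      MvPolynomial.eval f (vx ε * vy ε - vA ε * vy ε - vB ε * vx ε) = -1 := by
    simp [f, vA, vB, vx, vy, SVar.sign]
  omega
end
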